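/- Let p be a prime, S a commutative ring of characteristic p, and R = S[T, T₁₁, T₁₂, T₂₂] the polynomial ring in four variables. For ij ∈ {11, 12, 22} let D_ij : R → R be the S-linear operator D_ij(f) = (T_ij + 1)·∂f/∂T_ij. Define Θ₁(f) = T²·D₁₁(f) − T·D₁₂(f) + D₂₂(f), Θ₂(f) = 2T^{p+1}·D₁₁(f) − (T + T^p)·D₁₂(f) + 2·D₂₂(f), and Θ₃(f) = T^{2p}·D₁₁(f) − T^p·D₁₂(f) + D₂₂(f). Then Θ₁, Θ₂ and Θ₃ pairwise commute: Θ_i ∘ Θ_j = Θ_j ∘ Θ_i for all i, j ∈ {1,2,3}. -/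

import Mathlib

open MvPolynomial

/-- The operator `D_ij : f ↦ (T_ij + 1)·∂f/∂T_ij` on `S[T, T₁₁, T₁₂, T₂₂]`,
with the variables indexed by `Fin 4` as `0 ↦ T`, `1 ↦ T₁₁`, `2 ↦ T₁₂`, `3 ↦ T₂₂`. -/
noncomputable def Dij {S : Type*} [CommRing S] (i : Fin 4) (f : MvPolynomial (Fin 4) S) :
    MvPolynomial (Fin 4) S :=
  (X i + 1) * pderiv i f

/-- `Θ₁ f = T²·D₁₁ f − T·D₁₂ f + D₂₂ f`. -/
noncomputable def Theta1 {S : Type*} [CommRing S] (f : MvPolynomial (Fin 4) S) :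
    MvPolynomial (Fin 4) S :=
  X 0 ^ 2 * Dij 1 f - X 0 * Dij 2 f + Dij 3 f

/-- `Θ₂ f = 2T^{p+1}·D₁₁ f − (T + T^p)·D₁₂ f + 2·D₂₂ f`. -/
noncomputable def Theta2 {S : Type*} [CommRing S] (p : ℕ) (f : MvPolynomial (Fin 4) S) :
    MvPolynomial (Fin 4) S :=
  2 * X 0 ^ (p + 1) * Dij 1 f - (X 0 + X 0 ^ p) * Dij 2 f + 2 * Dij 3 f

/-- `Θ₃ f = T^{2p}·D₁₁ f − T^p·D₁₂ f + D₂₂ f`. -/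
noncomputable def Theta3 {S : Type*} [CommRing S] (p : ℕ) (f : MvPolynomial (Fin 4) S) :
    MvPolynomial (Fin 4) S :=
  X 0 ^ (2 * p) * Dij 1 f - X 0 ^ p * Dij 2 f + Dij 3 f

/-- `θ₄⁽ᴺ⁾ f = (T − T^p)·∂f/∂T + N·f`. -/
noncomputable def theta4 {S : Type*} [CommRing S] (p : ℕ) (N : ℤ) (f : MvPolynomial (Fin 4) S) :
    MvPolynomial (Fin 4) S :=
  (X 0 - X 0 ^ p) * pderiv 0 f + (N : MvPolynomial (Fin 4) S) * f

/-- The family `(Θ₁, Θ₂, Θ₃)` indexed by `Fin 3`. -/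
noncomputable def ThetaVec {S : Type*} [CommRing S] (p : ℕ) :
    Fin 3 → MvPolynomial (Fin 4) S → MvPolynomial (Fin 4) S :=
  ![Theta1, Theta2 p, Theta3 p]

/-!
The operators `Θ₁`, `Θ₂`, `Θ₃` are polynomials in multiplication by `T` and in `D₁₁`, `D₁₂`, `D₂₂`.
These four operators commute pairwise: each `D_ij` is a derivation killing `T`, and the bracket
`⁅D_ij, D_kl⁆` is a derivation that vanishes on the variables. Hence the algebra they generate is
commutative.
-/

section Derivation

variable {R A : Type*} [CommSemiring R] [CommSemiring A] [Algebra R A]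

theorem commute_mulLeft (a b : A) : Commute (LinearMap.mulLeft R a) (LinearMap.mulLeft R b) :=
  LinearMap.ext fun f ↦ mul_left_comm a b f

theorem commute_mulLeft_derivation {D : Derivation R A A} {a : A} (ha : D a = 0) :
    Commute (LinearMap.mulLeft R a) (D : Module.End R A) :=
  LinearMap.ext fun f ↦ by simp [ha]

end Derivation

section ShiftedEuler

variable {σ R : Type*}

section CommSemiring

variable [CommSemiring R]

variable (R) in
/-- The derivation `(Xᵢ + 1) ∂/∂Xᵢ` of a polynomial ring, i.e. the Euler operator `q ∂/∂q` in the
multiplicative coordinate `q = Xᵢ + 1`. It bundles `Dij` as a derivation. -/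
noncomputable def shiftedEuler (i : σ) : Derivation R (MvPolynomial σ R) (MvPolynomial σ R) :=
  (X i + 1 : MvPolynomial σ R) • pderiv i

theorem shiftedEuler_X_self (i : σ) : shiftedEuler R i (X i) = X i + 1 := by
  simp [shiftedEuler]

theorem shiftedEuler_X_of_ne {i j : σ} (h : j ≠ i) : shiftedEuler R i (X j) = 0 := by
  simp [shiftedEuler, pderiv_X_of_ne h]

variable (R) in
/-- The algebra of differential operators generated by the derivations `(Xᵢ + 1) ∂/∂Xᵢ` for `i ∈ s`
and by multiplication by the remaining variables `Xⱼ`, `j ∉ s`. -/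
noncomputable def eulerSubalgebra (s : Set σ) :
    Subalgebra R (Module.End R (MvPolynomial σ R)) :=
  Algebra.adjoin R
    ((fun i ↦ (shiftedEuler R i : Module.End R (MvPolynomial σ R))) '' s ∪
      (fun j ↦ LinearMap.mulLeft R (X j : MvPolynomial σ R)) '' sᶜ)

theorem shiftedEuler_mem_eulerSubalgebra {s : Set σ} {i : σ} (hi : i ∈ s) :
    (shiftedEuler R i : Module.End R (MvPolynomial σ R)) ∈ eulerSubalgebra R s :=
  Algebra.subset_adjoin (.inl ⟨i, hi, rfl⟩)

theorem mulLeft_X_mem_eulerSubalgebra {s : Set σ} {j : σ} (hj : j ∉ s) :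
    LinearMap.mulLeft R (X j : MvPolynomial σ R) ∈ eulerSubalgebra R s :=
  Algebra.subset_adjoin (.inr ⟨j, hj, rfl⟩)

end CommSemiring

variable [CommRing R]

theorem lie_shiftedEuler (i j : σ) : ⁅shiftedEuler R i, shiftedEuler R j⁆ = 0 := by
  obtain rfl | hij := eq_or_ne i j
  · exact lie_self _
  refine derivation_ext fun k ↦ ?_
  rw [Derivation.commutator_apply, Derivation.zero_apply]
  obtain rfl | hki := eq_or_ne k i
  · simp [shiftedEuler_X_self, shiftedEuler_X_of_ne hij]
  obtain rfl | hkj := eq_or_ne k j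
  · simp [shiftedEuler_X_self, shiftedEuler_X_of_ne hij.symm]
  · simp [shiftedEuler_X_of_ne hki, shiftedEuler_X_of_ne hkj]

theorem commute_shiftedEuler (i j : σ) :
    Commute (shiftedEuler R i : Module.End R (MvPolynomial σ R)) (shiftedEuler R j) := by
  rw [commute_iff_lie_eq, ← Derivation.commutator_coe_linear_map, lie_shiftedEuler,
    Derivation.coe_zero_linearMap]

theorem isMulCommutative_eulerSubalgebra (s : Set σ) : IsMulCommutative (eulerSubalgebra R s) := by
  have commute_mulLeft_shiftedEuler {i j : σ} (hi : i ∈ s) (hj : j ∉ s) :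
      Commute (LinearMap.mulLeft R (X j : MvPolynomial σ R)) (shiftedEuler R i) :=
    commute_mulLeft_derivation (shiftedEuler_X_of_ne (ne_of_mem_of_not_mem hi hj).symm)
  refine Algebra.isMulCommutative_adjoin R ?_
  rintro _ (⟨i, hi, rfl⟩ | ⟨j, hj, rfl⟩) _ (⟨k, hk, rfl⟩ | ⟨l, hl, rfl⟩)
  · exact commute_shiftedEuler i k
  · exact (commute_mulLeft_shiftedEuler hi hl).symm
  · exact commute_mulLeft_shiftedEuler hk hj
  · exact commute_mulLeft (X j) (X l)

end ShiftedEuler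

theorem coe_shiftedEuler_eq_Dij {S : Type*} [CommRing S] (i : Fin 4) :
    ⇑(shiftedEuler S i) = Dij i :=
  rfl

theorem exists_mem_eulerSubalgebra_coe_eq_ThetaVec {S : Type*} [CommRing S] (p : ℕ) (i : Fin 3) :
    ∃ Φ ∈ eulerSubalgebra S {0}ᶜ, ⇑Φ = ThetaVec (S := S) p i := by
  let T := LinearMap.mulLeft S (X 0 : MvPolynomial (Fin 4) S)
  let D (k : Fin 4) : Module.End S (MvPolynomial (Fin 4) S) := shiftedEuler S k
  have hT : T ∈ eulerSubalgebra S {0}ᶜ := mulLeft_X_mem_eulerSubalgebra (by simp)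
  have hD {k : Fin 4} (hk : k ≠ 0) : D k ∈ eulerSubalgebra S {0}ᶜ :=
    shiftedEuler_mem_eulerSubalgebra hk
  have hD₁ := hD (k := 1) (by decide)
  have hD₂ := hD (k := 2) (by decide)
  have hD₃ := hD (k := 3) (by decide)
  fin_cases i
  · refine ⟨T ^ 2 * D 1 - T * D 2 + D 3, ?_, ?_⟩
    · exact add_mem (sub_mem (mul_mem (pow_mem hT 2) hD₁) (mul_mem hT hD₂)) hD₃
    · ext1 f
      simp [T, D, ThetaVec, Theta1, coe_shiftedEuler_eq_Dij]
  · refine ⟨2 * T ^ (p + 1) * D 1 - (T + T ^ p) * D 2 + 2 * D 3, ?_, ?_⟩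
    · have two_mem := ofNat_mem (eulerSubalgebra S ({0}ᶜ : Set (Fin 4))) 2
      exact add_mem (sub_mem (mul_mem (mul_mem two_mem (pow_mem hT (p + 1))) hD₁)
        (mul_mem (add_mem hT (pow_mem hT p)) hD₂)) (mul_mem two_mem hD₃)
    · ext1 f
      simp [T, D, ThetaVec, Theta2, coe_shiftedEuler_eq_Dij, mul_assoc, add_mul]
  · refine ⟨T ^ (2 * p) * D 1 - T ^ p * D 2 + D 3, ?_, ?_⟩
    · exact add_mem (sub_mem (mul_mem (pow_mem hT (2 * p)) hD₁) (mul_mem (pow_mem hT p) hD₂)) hD₃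
    · ext1 f
      simp [T, D, ThetaVec, Theta3, coe_shiftedEuler_eq_Dij]

theorem stmt_14_general (p : ℕ) {S : Type*} [CommRing S] (i j : Fin 3)
    (f : MvPolynomial (Fin 4) S) :
    ThetaVec p i (ThetaVec p j f) = ThetaVec p j (ThetaVec p i f) := by
  obtain ⟨Φ, hΦ, hΦi⟩ := exists_mem_eulerSubalgebra_coe_eq_ThetaVec (S := S) p i
  obtain ⟨Ψ, hΨ, hΨj⟩ := exists_mem_eulerSubalgebra_coe_eq_ThetaVec (S := S) p j
  have := isMulCommutative_eulerSubalgebra (R := S) ({0}ᶜ : Set (Fin 4))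
  have commute : Φ * Ψ = Ψ * Φ := setLike_mul_comm hΦ hΨ
  rw [← hΦi, ← hΨj]
  exact LinearMap.congr_fun commute f

/-- Let `p` be a prime and `S` a commutative ring of characteristic `p`.  Then the
operators `Θ₁, Θ₂, Θ₃` on `S[T, T₁₁, T₁₂, T₂₂]` pairwise commute. -/
theorem stmt_14 (p : ℕ) (hp : p.Prime) (S : Type*) [CommRing S] [CharP S p]
    (i j : Fin 3) (f : MvPolynomial (Fin 4) S) :
    ThetaVec p i (ThetaVec p j f) = ThetaVec p j (ThetaVec p i f) :=
  stmt_14_general p i j f
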